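/- If E is a ceer with infinitely many equivalence classes such that the identity relation on ℕ is computably reducible to E (i.e., E is a light ceer with infinitely many classes), then E⁺ is computably bireducible with =^{ce}. -/

import Mathlib

/-- The `e`-th partial computable function. -/
def phi (e : ℕ) : ℕ →. ℕ :=
  Nat.Partrec.Code.eval (Denumerable.ofNat Nat.Partrec.Code e)

/-- `W_e`, the `e`-th c.e. set: the domain of `φ_e`. -/
def WSet (e : ℕ) : Set ℕ := (phi e).Dom

/-- The `E`-equivalence class of `k`. -/
def classOf (E : ℕ → ℕ → Prop) (k : ℕ) : Set ℕ := {x | E k x}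

/-- Computable reducibility of binary relations on ℕ. -/
def Reduces (E F : ℕ → ℕ → Prop) : Prop :=
  ∃ f : ℕ → ℕ, Computable f ∧ ∀ m n, E m n ↔ F (f m) (f n)

/-- The computable FS-jump of `E`: `e E⁺ e'` iff the set of `E`-classes of elements
of `ran φ_e` equals the set of `E`-classes of elements of `ran φ_{e'}`. -/
def FSJump (E : ℕ → ℕ → Prop) : ℕ → ℕ → Prop :=
  fun e e' => classOf E '' (phi e).ran = classOf E '' (phi e').ran

/-- Equality of c.e. sets: `e =^{ce} e'` iff `W_e = W_{e'}`. -/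
def eqCE : ℕ → ℕ → Prop := fun e e' => WSet e = WSet e'

/-- A ceer: an equivalence relation on ℕ which is c.e. as a set of pairs. -/
def Ceer (E : ℕ → ℕ → Prop) : Prop :=
  Equivalence E ∧ ∃ e : ℕ, ∀ m n : ℕ, E m n ↔ Nat.pair m n ∈ WSet e

/-!
The set of classes met by `ran φ_e` is determined by the `E`-saturation of `ran φ_e`. When `E` is
c.e., this saturation is c.e. uniformly in `e`, so the s-m-n theorem yields `E⁺ ≤ =^{ce}`.
Conversely, if `g` reduces equality to `E`, then `A ↦ g '' A` loses no information modulo `E`, and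
the s-m-n theorem turns an index for the domain `A` into one for the range `g '' A`.
-/

open Encodable Nat.Partrec

section Computability

variable {α β γ : Type*} [Primcodable α] [Primcodable β] [Primcodable γ]

theorem rePred_exists {p : α × β → Prop} (hp : REPred p) : REPred fun a => ∃ b, p (a, b) := by
  obtain ⟨c, hc⟩ := Code.exists_code.1 hp
  -- Dovetailing: `t` codes a step bound together with a candidate witness.
  let search (a : α) (t : ℕ) : Option ℕ :=
    Code.evaln t.unpair.1 c (Nat.pair (encode a) t.unpair.2)
  have hsearch : Computable₂ search := by
    have hunpair : Computable fun q : α × ℕ => q.2.unpair := Computable.unpair.comp Computable.snd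
    exact Code.primrec_evaln.to_comp.comp
      (((Computable.fst.comp hunpair).pair (Computable.const c)).pair
        (Primrec₂.natPair.to_comp.comp (Computable.encode.comp Computable.fst)
          (Computable.snd.comp hunpair)))
  refine (Partrec.rfindOpt hsearch).dom_re.of_eq fun a => ?_
  have eval_nonempty_iff (m : ℕ) : (∃ y, y ∈ c.eval (Nat.pair (encode a) m)) ↔
      ∃ b : β, b ∈ decode (α := β) m ∧ p (a, b) := by
    simp [hc, Part.mem_assert_iff]
  calc (Nat.rfindOpt (search a)).Dom
      ↔ ∃ t y, y ∈ search a t := Nat.rfindOpt_dom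
    _ ↔ ∃ m y, y ∈ c.eval (Nat.pair (encode a) m) := by
      simp only [search, Code.evaln_complete]
      refine ⟨fun ⟨t, y, hy⟩ => ⟨_, y, _, hy⟩, fun ⟨m, y, k, hy⟩ => ⟨Nat.pair k m, y, ?_⟩⟩
      rwa [Nat.unpair_pair]
    _ ↔ ∃ b, p (a, b) := by
      simp only [eval_nonempty_iff]
      exact ⟨fun ⟨_, b, _, hb⟩ => ⟨b, hb⟩, fun ⟨b, hb⟩ => ⟨encode b, b, encodek b, hb⟩⟩

theorem rePred_exists_mem_ran {f : α → β →. γ} (hf : Partrec₂ f) {R : α → γ → Prop}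
    (hR : REPred fun q : α × γ => R q.1 q.2) : REPred fun a => ∃ y ∈ (f a).ran, R a y := by
  have hbind : Partrec fun q : α × β =>
      (f q.1 q.2).bind fun y => Part.assert (R q.1 y) fun _ => Part.some () :=
    hf.bind (hR.comp ((Computable.fst.comp Computable.fst).pair Computable.snd))
  refine (rePred_exists hbind.dom_re).of_eq fun a => ?_
  simp only [PFun.ran, Part.dom_iff_mem, Part.mem_bind_iff, Part.mem_assert_iff]
  exact ⟨fun ⟨b, _, y, hy, hRy, _⟩ => ⟨y, ⟨b, hy⟩, hRy⟩,
    fun ⟨y, ⟨b, hy⟩, hRy⟩ => ⟨b, (), y, hy, hRy, Part.mem_some _⟩⟩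

end Computability

section Indices

variable {α : Type*} [Primcodable α]

theorem partrec₂_phi : Partrec₂ phi :=
  Code.eval_part.comp ((Computable.ofNat Code).comp Computable.fst) Computable.snd

theorem exists_computable_phi_eq {F : α → ℕ →. ℕ} (hF : Partrec₂ F) :
    ∃ f : α → ℕ, Computable f ∧ ∀ a, phi (f a) = F a := by
  obtain ⟨c, hc⟩ := Code.exists_code.1 hF
  refine ⟨fun a => encode (c.curry (encode a)), ?_, fun a => ?_⟩
  · exact Computable.encode.comp
      (Code.primrec₂_curry.to_comp.comp (Computable.const c) Computable.encode)
  · funext n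
    have hcode : phi (encode (c.curry (encode a))) n = (F a n).map encode := by
      simp [phi, Code.eval_curry, hc]
    exact hcode.trans (Part.map_id' encode_nat _)

theorem exists_computable_WSet_eq {p : α → ℕ → Prop} (hp : REPred fun q : α × ℕ => p q.1 q.2) :
    ∃ f : α → ℕ, Computable f ∧ ∀ a, WSet (f a) = {x | p a x} := by
  obtain ⟨f, hf, hphi⟩ :=
    exists_computable_phi_eq (hp.map (Computable.const (0 : ℕ)).to₂).to₂
  refine ⟨f, hf, fun a => ?_⟩
  ext x
  simp [WSet, hphi, Part.assert]

theorem exists_computable_ran_phi_eq_image {g : ℕ → ℕ} (hg : Computable g) :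
    ∃ f : ℕ → ℕ, Computable f ∧ ∀ e, (phi (f e)).ran = g '' WSet e := by
  have hF : Partrec₂ fun e x : ℕ => (phi e x).map fun _ => g x :=
    partrec₂_phi.map (hg.comp (Computable.snd.comp Computable.fst))
  obtain ⟨f, hf, hphi⟩ := exists_computable_phi_eq hF
  refine ⟨f, hf, fun e => ?_⟩
  ext y
  simp [hphi, PFun.ran, WSet, PFun.mem_dom]

end Indices

section Jump

variable {E : ℕ → ℕ → Prop}

/-- The `E`-saturation of `A`: the union of the `E`-classes of the elements of `A`. -/
def saturation (E : ℕ → ℕ → Prop) (A : Set ℕ) : Set ℕ := {x | ∃ k ∈ A, E k x}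

theorem classOf_eq_classOf_iff (hE : Equivalence E) {a b : ℕ} :
    classOf E a = classOf E b ↔ E a b := by
  refine ⟨fun h => h.symm.subset (hE.refl b), fun hab => Set.ext fun x => ?_⟩
  exact ⟨hE.trans (hE.symm hab), hE.trans hab⟩

theorem classOf_mem_image_iff (hE : Equivalence E) {A : Set ℕ} {x : ℕ} :
    classOf E x ∈ classOf E '' A ↔ x ∈ saturation E A := by
  simp only [Set.mem_image, classOf_eq_classOf_iff hE, saturation, Set.mem_ofPred_eq]

theorem image_classOf_eq_iff (hE : Equivalence E) {A B : Set ℕ} :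
    classOf E '' A = classOf E '' B ↔ saturation E A = saturation E B := by
  have preimage_eq (C : Set ℕ) : classOf E ⁻¹' (classOf E '' C) = saturation E C :=
    Set.ext fun _ => classOf_mem_image_iff hE
  rw [← preimage_eq, ← preimage_eq,
    Set.preimage_eq_preimage' (Set.image_subset_range _ _) (Set.image_subset_range _ _)]

theorem Ceer.rePred (hE : Ceer E) : REPred fun q : ℕ × ℕ => E q.1 q.2 := by
  obtain ⟨-, e, he⟩ := hE
  have hdom : REPred fun q : ℕ × ℕ => (phi e (Nat.pair q.1 q.2)).Dom :=
    (partrec₂_phi.comp (Computable.const e) Primrec₂.natPair.to_comp).dom_re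
  exact hdom.of_eq fun q => (he q.1 q.2).symm

theorem Ceer.exists_computable_WSet_eq_saturation (hE : Ceer E) :
    ∃ f : ℕ → ℕ, Computable f ∧ ∀ e, WSet (f e) = saturation E (phi e).ran := by
  have hphi : Partrec₂ fun q : ℕ × ℕ => phi q.1 :=
    partrec₂_phi.comp (Computable.fst.comp Computable.fst) Computable.snd
  have hrel : REPred fun q : (ℕ × ℕ) × ℕ => E q.2 q.1.2 :=
    hE.rePred.comp (Computable.snd.pair (Computable.snd.comp Computable.fst))
  exact exists_computable_WSet_eq (rePred_exists_mem_ran hphi hrel)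

theorem Ceer.reduces_FSJump_eqCE (hE : Ceer E) : Reduces (FSJump E) eqCE := by
  obtain ⟨f, hf, hW⟩ := hE.exists_computable_WSet_eq_saturation
  refine ⟨f, hf, fun m n => ?_⟩
  simp only [FSJump, eqCE, hW, image_classOf_eq_iff hE.1]

theorem injective_classOf_comp {g : ℕ → ℕ} (hg : ∀ m n, m = n ↔ E (g m) (g n)) :
    Function.Injective (classOf E ∘ g) := fun m n h =>
  (hg m n).2 (h.symm.subset ((hg n n).1 rfl))

theorem reduces_eqCE_FSJump (hlight : Reduces (@Eq ℕ) E) : Reduces eqCE (FSJump E) := by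
  obtain ⟨g, hg, hgE⟩ := hlight
  obtain ⟨f, hf, hran⟩ := exists_computable_ran_phi_eq_image hg
  refine ⟨f, hf, fun m n => ?_⟩
  simp only [eqCE, FSJump, hran, ← Set.image_comp]
  exact (injective_classOf_comp hgE).image_injective.eq_iff.symm

end Jump

/-- If `E` is a light ceer with infinitely many classes (i.e. `id ≤ E`), then `E⁺` is
computably bireducible with `=^{ce}`. -/
theorem light_ceer_high (E : ℕ → ℕ → Prop) (hE : Ceer E)
    (hinf : (Set.range (classOf E)).Infinite)
    (hlight : Reduces (@Eq ℕ) E) :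
    Reduces (FSJump E) eqCE ∧ Reduces eqCE (FSJump E) := by
  exact ⟨hE.reduces_FSJump_eqCE, reduces_eqCE_FSJump hlight⟩
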